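/- arXiv:2312.12715 — 6 statements merged into one kernel-verified Lean document; each statement's English description precedes it below -/
import Mathlib

section
/- (Proposition 1, Maximal Sufficient Performance) For every q ∈ Q, the proposed allocator a'_q is a q-explainable allocator that maximizes the sufficient ensemble performance: a'_q ∈ A*_q, i.e., (1/n)Σ_i a'_q(i) = q and t̄'(a'_q) ≥ t̄'(a) for every q-explainable allocator a. -/
/-!
Write `d i = sg i - sb i ∈ {-1, 0, 1}` for the gain in sufficiency obtained by allocating `i` to the
glass box. Up to a term independent of the allocator, `tbar` is `(1 / n) ∑ d i * a i`, so among
allocators of a fixed size the best ones select observations of largest gain. The ranking `rt` does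
so because it refines the order of `d` (`gain_le_of_rt_le`): as the sigmoid lies in `(0, 1)`, the
values of `rt` lie in `(-2, -1)` when `d = -1`, in `(-1, 1)` when `d = 0` and in `(1, 2)` when
`d = 1`.

As `rt` is injective, `rank` is a bijection onto `{1, …, n}`, so exactly `k = n q` observations have
rank above `n - k` (`card_rank_gt`). For optimality, let `c` be the gain of the lowest-ranked
selected observation: then `(d i - c) * (a i - a' i) ≤ 0` for every `i`, while
`∑ (a i - a' i) = 0`, and summing gives the claim.
-/

open Finset

/-- `a` is a q-explainable allocator: it is {0,1}-valued and allocates a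
proportion `q` of the `n` observations to the glass box. -/
def isQAlloc (n : ℕ) (q : ℝ) (a : Fin n → ℝ) : Prop :=
  (∀ i, a i = 0 ∨ a i = 1) ∧ (1 / (n : ℝ)) * ∑ i, a i = q

/-- Sufficient ensemble performance t̄'. -/
noncomputable def tbar (n : ℕ) (sg sb a : Fin n → ℝ) : ℝ :=
  (1 / (n : ℝ)) * ∑ i, (sg i * a i + sb i * (1 - a i))

theorem rank_lt_of_rt_lt {n : ℕ} {rt : Fin n → ℝ} {rank : Fin n → ℕ}
    (hrank : ∀ i, rank i = (Finset.univ.filter (fun j => rt j ≤ rt i)).card)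
    {i j : Fin n} (h : rt i < rt j) : rank i < rank j := by
  rw [hrank, hrank]
  apply Finset.card_lt_card
  rw [Finset.ssubset_iff_of_subset]
  · exact ⟨j, by simp, by simpa using h⟩
  · intro l hl
    simp only [Finset.mem_filter, Finset.mem_univ, true_and] at hl ⊢
    exact hl.trans h.le

theorem image_rank {n : ℕ} {rt : Fin n → ℝ} {rank : Fin n → ℕ} (hinj : Function.Injective rt)
    (hrank : ∀ i, rank i = (Finset.univ.filter (fun j => rt j ≤ rt i)).card) :
    Finset.univ.image rank = Finset.Icc 1 n ∧ Function.Injective rank := by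
  have hri : Function.Injective rank := by
    intro i j h
    rcases lt_trichotomy (rt i) (rt j) with h' | h' | h'
    · have := rank_lt_of_rt_lt hrank h'
      omega
    · exact hinj h'
    · have := rank_lt_of_rt_lt hrank h'
      omega
  refine ⟨Finset.eq_of_subset_of_card_le ?_ ?_, hri⟩
  · intro m hm
    obtain ⟨i, -, rfl⟩ := Finset.mem_image.1 hm
    rw [Finset.mem_Icc, hrank]
    refine ⟨Finset.card_pos.2 ⟨i, by simp⟩, ?_⟩
    simpa using Finset.card_filter_le (Finset.univ : Finset (Fin n)) (fun j => rt j ≤ rt i)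
  · simp [Finset.card_image_of_injective _ hri]

theorem card_rank_gt {n k : ℕ} (hk : k ≤ n) {rt : Fin n → ℝ} {rank : Fin n → ℕ}
    (hinj : Function.Injective rt)
    (hrank : ∀ i, rank i = (Finset.univ.filter (fun j => rt j ≤ rt i)).card) :
    (Finset.univ.filter (fun i => n - k < rank i)).card = k := by
  obtain ⟨him, hri⟩ := image_rank hinj hrank
  rw [← Finset.card_image_of_injective _ hri, ← Finset.filter_image (p := fun m => n - k < m), him]
  have : (Finset.Icc 1 n).filter (fun m => n - k < m) = Finset.Ioc (n - k) n := by
    ext m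
    simp only [Finset.mem_filter, Finset.mem_Icc, Finset.mem_Ioc]
    omega
  rw [this, Nat.card_Ioc]
  omega

/-- The ranking refines the order of the gains `sg - sb`; `x` and `y` stand for values of
`ℓ_b - ℓ_g`. -/
theorem gain_le_of_rt_le {g b g' b' x y : ℝ}
    (hg : g = 0 ∨ g = 1) (hb : b = 0 ∨ b = 1) (hg' : g' = 0 ∨ g' = 1) (hb' : b' = 0 ∨ b' = 1)
    (h : 2 * g - b - 1 / (1 + Real.exp (-x)) ≤ 2 * g' - b' - 1 / (1 + Real.exp (-y))) :
    g - b ≤ g' - b' := by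
  have key : ∀ z : ℝ, 0 < 1 / (1 + Real.exp (-z)) ∧ 1 / (1 + Real.exp (-z)) < 1 := by
    intro z
    have := Real.exp_pos (-z)
    refine ⟨by positivity, ?_⟩
    rw [div_lt_one (by positivity)]
    linarith
  obtain ⟨hx0, hx1⟩ := key x
  obtain ⟨hy0, hy1⟩ := key y
  rcases hg with rfl | rfl <;> rcases hb with rfl | rfl <;> rcases hg' with rfl | rfl <;>
    rcases hb' with rfl | rfl <;> linarith

/-- Proposition 1 (Maximal Sufficient Performance): for every q ∈ Q, the
proposed allocator a'_q is a q-explainable allocator maximizing t̄'. -/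
theorem maximal_sufficient_performance
    (n : ℕ) (hn : 1 ≤ n)
    (sg sb : Fin n → ℝ)
    (hsg : ∀ i, sg i = 0 ∨ sg i = 1) (hsb : ∀ i, sb i = 0 ∨ sb i = 1)
    (lg lb : Fin n → ℝ)
    (rt : Fin n → ℝ)
    (hrt : ∀ i, rt i = 2 * sg i - sb i - 1 / (1 + Real.exp (-(lb i - lg i))))
    (hinj : Function.Injective rt)
    (rank : Fin n → ℕ)
    (hrank : ∀ i, rank i = (Finset.univ.filter (fun j => rt j ≤ rt i)).card)
    (q : ℝ) (hq : ∃ k : ℕ, 1 ≤ k ∧ k ≤ n ∧ q = (k : ℝ) / n)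
    (a' : Fin n → ℝ)
    (ha' : ∀ i, a' i = if (n : ℝ) * (1 - q) < (rank i : ℝ) then 1 else 0) :
    isQAlloc n q a' ∧
      ∀ a : Fin n → ℝ, isQAlloc n q a → tbar n sg sb a ≤ tbar n sg sb a' := by
  obtain ⟨k, hk1, hkn, rfl⟩ := hq
  have hn0 : (0 : ℝ) < n := by exact_mod_cast hn
  have hsel : ∀ i, (n : ℝ) * (1 - (k : ℝ) / n) < (rank i : ℝ) ↔ n - k < rank i := by
    intro i
    have : (n : ℝ) * (1 - (k : ℝ) / n) = ((n - k : ℕ) : ℝ) := by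
      rw [Nat.cast_sub hkn]
      field_simp
    rw [this, Nat.cast_lt]
  have ha : ∀ i, a' i = if n - k < rank i then 1 else 0 := by
    intro i
    rw [ha' i, if_congr (hsel i) rfl rfl]
  have hcard := card_rank_gt hkn hinj hrank
  have hsum : ∑ i, a' i = k := by
    simp only [ha, Finset.sum_boole, hcard]
  refine ⟨⟨fun i => ?_, by rw [hsum]; ring⟩, ?_⟩
  · rw [ha i]
    split_ifs <;> simp
  rintro a ⟨ha01, haq⟩
  have hasum : ∑ i, a i = k := by
    field_simp at haq
    exact haq
  -- `i₀` is the lowest-ranked selected observation; one exists because `1 ≤ k`.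
  obtain ⟨i₀, hi₀, hmin⟩ := Finset.exists_min_image
    (Finset.univ.filter (fun i => n - k < rank i)) rt (Finset.card_pos.1 (by omega))
  simp only [Finset.mem_filter, Finset.mem_univ, true_and] at hi₀ hmin
  have hmono : ∀ i j, rt i ≤ rt j → sg i - sb i ≤ sg j - sb j := by
    intro i j h
    rw [hrt i, hrt j] at h
    exact gain_le_of_rt_le (hsg i) (hsb i) (hsg j) (hsb j) h
  have hterm : ∀ i, (sg i - sb i - (sg i₀ - sb i₀)) * (a i - a' i) ≤ 0 := by
    intro i
    have hai : 0 ≤ a i ∧ a i ≤ 1 := by rcases ha01 i with h | h <;> simp [h]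
    rw [ha i]
    split_ifs with h
    · exact mul_nonpos_of_nonneg_of_nonpos (sub_nonneg.2 (hmono _ _ (hmin i h)))
        (by linarith [hai.2])
    · have hlt : rt i ≤ rt i₀ := by
        by_contra! hgt
        have := rank_lt_of_rt_lt hrank hgt
        omega
      exact mul_nonpos_of_nonpos_of_nonneg (sub_nonpos.2 (hmono _ _ hlt))
        (by linarith [hai.1])
  have hle := Finset.sum_nonpos (s := Finset.univ) (fun i _ => hterm i)
  have hdiff : ∑ i, (sg i * a i + sb i * (1 - a i)) - ∑ i, (sg i * a' i + sb i * (1 - a' i))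
      = ∑ i, (sg i - sb i - (sg i₀ - sb i₀)) * (a i - a' i)
        + (sg i₀ - sb i₀) * (∑ i, a i - ∑ i, a' i) := by
    rw [← Finset.sum_sub_distrib, ← Finset.sum_sub_distrib, Finset.mul_sum,
      ← Finset.sum_add_distrib]
    exact Finset.sum_congr rfl fun i _ => by ring
  rw [hasum, hsum, sub_self, mul_zero, add_zero] at hdiff
  unfold tbar
  exact mul_le_mul_of_nonneg_left (by linarith) (by positivity)
end

section
/- (Proposition 2, Maximal Sufficient Explainable Performance) For every q ∈ Q, the proposed allocator a'_q belongs to A*_{q|g}: among all q-explainable allocators maximizing the sufficient ensemble performance t̄', a'_q additionally maximizes the sufficient explainable performance t̄'_g. -/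
/-!
Since `σ` takes values in the open interval `(0, 1)`, the ranking `rt = 2 sg - sb - σ` lies in
`(1, 2)`, `(0, 1)`, `(-1, 0)`, `(-2, -1)` according as `(sg, sb)` is `(1, 0)`, `(1, 1)`, `(0, 0)`,
`(0, 1)`. These intervals are disjoint, so both `sg - sb` and `sg` are nondecreasing along the
ranking (`gain_mono`, `sg_mono`). The proposed allocator selects the top `k = n q` observations
(`sum_topRank`), and selecting the top `k` maximizes `∑ f i * a i` among 0/1 vectors of sum `k`
for any such monotone score `f` (`sum_le_of_threshold`). Up to the factor `1 / n` and an additive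
constant, `f = sg - sb` gives
`tbar` and `f = sg` gives `tbarg`; in particular `a'` maximizes `tbarg` over all of `A_q`, not
merely over the maximizers of `tbar`.
-/

open Finset

/-- Sufficient explainable performance t̄'_g. -/
noncomputable def tbarg (n : ℕ) (sg a : Fin n → ℝ) : ℝ :=
  (1 / (n : ℝ)) * ∑ i, sg i * a i

/-- Membership in A*_q: a q-explainable allocator maximizing t̄' over A_q. -/
def memAstar (n : ℕ) (q : ℝ) (sg sb a : Fin n → ℝ) : Prop :=
  isQAlloc n q a ∧ ∀ b : Fin n → ℝ, isQAlloc n q b → tbar n sg sb b ≤ tbar n sg sb a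

/-- Exchange argument: if every index chosen by `a'` has score at least that of every index it
does not choose, then `a'` maximizes the total score among 0/1 vectors with the same sum. -/
lemma sum_le_of_threshold {n : ℕ} (f a a' : Fin n → ℝ)
    (ha : ∀ i, a i = 0 ∨ a i = 1) (ha' : ∀ i, a' i = 0 ∨ a' i = 1)
    (hsum : ∑ i, a i = ∑ i, a' i) (hne : ∃ i, a' i = 1)
    (hf : ∀ i j, a' i = 0 → a' j = 1 → f i ≤ f j) :
    ∑ i, f i * a i ≤ ∑ i, f i * a' i := by
  -- The lowest chosen score `f m` separates the chosen scores from the others.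
  obtain ⟨m, hm, hmin⟩ := (univ.filter (fun i => a' i = 1)).exists_min_image f
    (by obtain ⟨i, hi⟩ := hne; exact ⟨i, by simpa using hi⟩)
  have hm1 : a' m = 1 := by simpa using hm
  have key : ∑ i, (f i - f m) * a i ≤ ∑ i, (f i - f m) * a' i := by
    refine sum_le_sum fun i _ => ?_
    rcases ha' i with h | h
    · have := hf i m h hm1
      rcases ha i with h2 | h2 <;> rw [h, h2] <;> linarith
    · have := hmin i (by simpa using h)
      rcases ha i with h2 | h2 <;> rw [h, h2] <;> linarith
  simp only [sub_mul, sum_sub_distrib, ← mul_sum] at key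
  rw [hsum] at key
  linarith

lemma rank_lt_of_lt {n : ℕ} (rt : Fin n → ℝ) (rank : Fin n → ℕ)
    (hrank : ∀ i, rank i = (univ.filter (fun j => rt j ≤ rt i)).card)
    {i j : Fin n} (h : rt i < rt j) : rank i < rank j := by
  rw [hrank, hrank]
  refine card_lt_card ((ssubset_iff_of_subset fun x hx => ?_).2 ⟨j, ?_, ?_⟩)
  · simp only [mem_filter, mem_univ, true_and] at hx ⊢
    linarith
  · simp
  · simpa using h

/-- The ranks are exactly `1, …, n`, so exactly `k` of them exceed `n - k`. -/
lemma sum_topRank {n : ℕ} (rt : Fin n → ℝ) (hinj : Function.Injective rt) (rank : Fin n → ℕ)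
    (hrank : ∀ i, rank i = (univ.filter (fun j => rt j ≤ rt i)).card)
    (k : ℕ) (hk : k ≤ n) :
    (univ.filter (fun i => n - k < rank i)).card = k := by
  have hri : Function.Injective rank := by
    intro i j hij
    by_contra hne
    rcases lt_or_gt_of_ne (fun h => hne (hinj h)) with h | h
    · have := rank_lt_of_lt rt rank hrank h
      omega
    · have := rank_lt_of_lt rt rank hrank h
      omega
  have himg : univ.image rank = Icc 1 n := by
    refine eq_of_subset_of_card_le (fun x hx => ?_) ?_
    · obtain ⟨i, -, rfl⟩ := mem_image.1 hx
      rw [mem_Icc, hrank]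
      exact ⟨card_pos.2 ⟨i, by simp⟩, (card_le_univ _).trans (by simp)⟩
    · rw [card_image_of_injective _ hri]
      simp
  have h2 : (univ.filter (fun i => n - k < rank i)).image rank = Ioc (n - k) n := by
    ext x
    have hx : x ∈ univ.image rank ↔ x ∈ Icc 1 n := by rw [himg]
    simp only [mem_image, mem_univ, true_and, mem_Icc] at hx
    simp only [mem_image, mem_filter, mem_univ, true_and, mem_Ioc]
    constructor
    · rintro ⟨i, hi, rfl⟩
      exact ⟨hi, (hx.1 ⟨i, rfl⟩).2⟩
    · rintro ⟨h1, h2⟩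
      obtain ⟨i, rfl⟩ := hx.2 ⟨by omega, h2⟩
      exact ⟨i, h1, rfl⟩
  rw [← card_image_of_injective _ hri, h2, Nat.card_Ioc]
  omega

lemma sigmoid_bounds (x : ℝ) :
    0 < 1 / (1 + Real.exp (-x)) ∧ 1 / (1 + Real.exp (-x)) < 1 := by
  have := Real.exp_pos (-x)
  refine ⟨by positivity, ?_⟩
  rw [div_lt_one (by positivity)]
  linarith

lemma sg_mono {g b s g' b' s' : ℝ} (hg : g = 0 ∨ g = 1) (hb : b = 0 ∨ b = 1)
    (hg' : g' = 0 ∨ g' = 1) (hb' : b' = 0 ∨ b' = 1) (hs : 0 < s ∧ s < 1)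
    (hs' : 0 < s' ∧ s' < 1) (h : 2 * g - b - s < 2 * g' - b' - s') : g ≤ g' := by
  rcases hg with rfl | rfl <;> rcases hb with rfl | rfl <;> rcases hg' with rfl | rfl <;>
    rcases hb' with rfl | rfl <;> linarith [hs.1, hs.2, hs'.1, hs'.2]

lemma gain_mono {g b s g' b' s' : ℝ} (hg : g = 0 ∨ g = 1) (hb : b = 0 ∨ b = 1)
    (hg' : g' = 0 ∨ g' = 1) (hb' : b' = 0 ∨ b' = 1) (hs : 0 < s ∧ s < 1)
    (hs' : 0 < s' ∧ s' < 1) (h : 2 * g - b - s < 2 * g' - b' - s') : g - b ≤ g' - b' := by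
  rcases hg with rfl | rfl <;> rcases hb with rfl | rfl <;> rcases hg' with rfl | rfl <;>
    rcases hb' with rfl | rfl <;> linarith [hs.1, hs.2, hs'.1, hs'.2]

/-- Isolates the part of `tbar` that depends on the allocator. -/
lemma tbar_eq (n : ℕ) (sg sb a : Fin n → ℝ) :
    tbar n sg sb a = (1 / (n : ℝ)) * (∑ i, (sg i - sb i) * a i + ∑ i, sb i) := by
  rw [tbar, ← sum_add_distrib]
  congr 1
  exact sum_congr rfl fun i _ => by ring

/-- Proposition 2 (Maximal Sufficient Explainable Performance): for every q ∈ Q,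
the proposed allocator a'_q belongs to A*_{q|g}: it belongs to A*_q and maximizes
t̄'_g among all members of A*_q. -/
theorem maximal_sufficient_explainable_performance
    (n : ℕ) (hn : 1 ≤ n)
    (sg sb : Fin n → ℝ)
    (hsg : ∀ i, sg i = 0 ∨ sg i = 1) (hsb : ∀ i, sb i = 0 ∨ sb i = 1)
    (lg lb : Fin n → ℝ)
    (rt : Fin n → ℝ)
    (hrt : ∀ i, rt i = 2 * sg i - sb i - 1 / (1 + Real.exp (-(lb i - lg i))))
    (hinj : Function.Injective rt)
    (rank : Fin n → ℕ)
    (hrank : ∀ i, rank i = (Finset.univ.filter (fun j => rt j ≤ rt i)).card)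
    (q : ℝ) (hq : ∃ k : ℕ, 1 ≤ k ∧ k ≤ n ∧ q = (k : ℝ) / n)
    (a' : Fin n → ℝ)
    (ha' : ∀ i, a' i = if (n : ℝ) * (1 - q) < (rank i : ℝ) then 1 else 0) :
    memAstar n q sg sb a' ∧
      ∀ a : Fin n → ℝ, memAstar n q sg sb a → tbarg n sg a ≤ tbarg n sg a' := by
  obtain ⟨k, hk1, hkn, rfl⟩ := hq
  have hn0 : (0 : ℝ) < n := by exact_mod_cast hn
  have hcond : ∀ i, (n : ℝ) * (1 - (k : ℝ) / n) < (rank i : ℝ) ↔ n - k < rank i := by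
    intro i
    have : (n : ℝ) * (1 - (k : ℝ) / n) = ((n - k : ℕ) : ℝ) := by
      rw [Nat.cast_sub hkn]
      field_simp
    rw [this, Nat.cast_lt]
  simp only [hcond] at ha'
  have h01 : ∀ i, a' i = 0 ∨ a' i = 1 := by
    intro i
    rw [ha']
    split_ifs <;> simp
  have hsum' : ∑ i, a' i = k := by
    simp only [ha', sum_boole]
    rw [sum_topRank rt hinj rank hrank k hkn]
  have hne : ∃ i, a' i = 1 := by
    by_contra! hcon
    have h0 : ∑ i, a' i = 0 := sum_eq_zero fun i _ => (h01 i).resolve_right (hcon i)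
    rw [hsum'] at h0
    have : k = 0 := by exact_mod_cast h0
    omega
  have hlt : ∀ i j, a' i = 0 → a' j = 1 → rt i < rt j := by
    intro i j hi hj
    rw [ha'] at hi hj
    have hi' : ¬ n - k < rank i := by
      intro h
      simp [h] at hi
    have hj' : n - k < rank j := by
      by_contra h
      simp [h] at hj
    by_contra! hle
    rcases hle.lt_or_eq with h | h
    · have := rank_lt_of_lt rt rank hrank h
      omega
    · rw [hinj h] at hj'
      exact hi' hj'
  have hQ : isQAlloc n ((k : ℝ) / n) a' := ⟨h01, by rw [hsum']; ring⟩
  have hsumb : ∀ b, isQAlloc n ((k : ℝ) / n) b → ∑ i, b i = ∑ i, a' i := by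
    intro b hb
    have h := hb.2.trans hQ.2.symm
    exact mul_left_cancel₀ (by positivity) h
  have hc : 0 ≤ 1 / (n : ℝ) := by positivity
  refine ⟨⟨hQ, fun b hb => ?_⟩, fun a ha => ?_⟩
  · rw [tbar_eq, tbar_eq]
    refine mul_le_mul_of_nonneg_left (add_le_add_left ?_ _) hc
    refine sum_le_of_threshold (fun i => sg i - sb i) b a' hb.1 h01 (hsumb b hb) hne ?_
    intro i j hi hj
    have h := hlt i j hi hj
    rw [hrt, hrt] at h
    exact gain_mono (hsg i) (hsb i) (hsg j) (hsb j) (sigmoid_bounds _) (sigmoid_bounds _) h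
  · refine mul_le_mul_of_nonneg_left ?_ hc
    refine sum_le_of_threshold sg a a' ha.1.1 h01 (hsumb a ha.1) hne ?_
    intro i j hi hj
    have h := hlt i j hi hj
    rw [hrt, hrt] at h
    exact sg_mono (hsg i) (hsb i) (hsg j) (hsb j) (sigmoid_bounds _) (sigmoid_bounds _) h
end

section
/- (Lemma 3, Set Equivalence 1) For every q ∈ Q, A*_q = B*_q, where A*_q is the set of q-explainable allocators maximizing the sufficient ensemble performance t̄', and B*_q is the set of q-explainable allocators a for which the crossing sets C_{g,02}(a), C_{02,b}(a), and C_{g,b}(a) are all empty. -/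
/-!
Write `w i = sg i - sb i ∈ {-1, 0, 1}`. Up to a constant and the factor `1 / n`, `tbar` is the linear
functional `∑ i, w i * a i`, and emptiness of the three crossing sets says exactly that
`w j < w i` forces `a j ≤ a i` (`noCrossing_iff`).

If some pair violates this, exchanging the values `a i = 0` and `a j = 1` keeps `∑ i, a i` and
strictly increases the functional (`exists_better_of_crossing`). Conversely, an `a` without
violations has a threshold `c` with `a i = 1` above it and `a i = 0` below it, so
`(w i - c) * (a i - b i) ≥ 0` pointwise for every competitor `b`; summing, the `c`-terms cancel since
`a` and `b` have the same sum (`le_of_noCrossing`).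
-/

open Finset

/-- i ∈ Z_g : only the glass box is sufficient. -/
def inZg (n : ℕ) (sg sb : Fin n → ℝ) (i : Fin n) : Prop := sg i = 1 ∧ sb i = 0

/-- i ∈ Z_b : only the black box is sufficient. -/
def inZb (n : ℕ) (sg sb : Fin n → ℝ) (i : Fin n) : Prop := sg i = 0 ∧ sb i = 1

/-- i ∈ Z_2 : both models are sufficient. -/
def inZ2 (n : ℕ) (sg sb : Fin n → ℝ) (i : Fin n) : Prop := sg i = 1 ∧ sb i = 1

/-- i ∈ Z_0 : neither model is sufficient. -/
def inZ0 (n : ℕ) (sg sb : Fin n → ℝ) (i : Fin n) : Prop := sg i = 0 ∧ sb i = 0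

/-- i ∈ Z_02 = Z_0 ∪ Z_2. -/
def inZ02 (n : ℕ) (sg sb : Fin n → ℝ) (i : Fin n) : Prop :=
  inZ0 n sg sb i ∨ inZ2 n sg sb i

theorem tbar_le_iff {n : ℕ} (hn : 1 ≤ n) (sg sb a b : Fin n → ℝ) :
    tbar n sg sb b ≤ tbar n sg sb a ↔
      ∑ i, (sg i - sb i) * b i ≤ ∑ i, (sg i - sb i) * a i := by
  have hpos : (0 : ℝ) < 1 / (n : ℝ) := by positivity
  have key : ∀ x : Fin n → ℝ, ∑ i, (sg i * x i + sb i * (1 - x i)) =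
      ∑ i, (sg i - sb i) * x i + ∑ i, sb i := fun x => by
    rw [← Finset.sum_add_distrib]
    exact Finset.sum_congr rfl fun i _ => by ring
  unfold tbar
  rw [mul_le_mul_iff_right₀ hpos, key, key, add_le_add_iff_right]

theorem noCrossing_iff {n : ℕ} {sg sb : Fin n → ℝ}
    (hsg : ∀ i, sg i = 0 ∨ sg i = 1) (hsb : ∀ i, sb i = 0 ∨ sb i = 1) (a : Fin n → ℝ) :
    ((∀ i j, inZg n sg sb i → inZ02 n sg sb j → ¬ a i < a j) ∧
     (∀ i j, inZ02 n sg sb i → inZb n sg sb j → ¬ a i < a j) ∧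
     (∀ i j, inZg n sg sb i → inZb n sg sb j → ¬ a i < a j)) ↔
    ∀ i j, sg j - sb j < sg i - sb i → a j ≤ a i := by
  simp only [inZg, inZ02, inZb, inZ0, inZ2, not_lt]
  constructor
  · rintro ⟨h1, h2, h3⟩ i j hw
    have h1 := h1 i j
    have h2 := h2 i j
    have h3 := h3 i j
    rcases hsg i with p | p <;> rcases hsb i with q | q <;> rcases hsg j with r | r <;>
      rcases hsb j with s | s <;> simp only [p, q, r, s] at h1 h2 h3 hw <;> norm_num at *
    all_goals assumption
  · intro h
    refine ⟨fun i j hi hj => h i j ?_, fun i j hi hj => h i j ?_, fun i j hi hj => h i j ?_⟩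
    · rcases hj with hj | hj <;> linarith [hi.1, hi.2, hj.1, hj.2]
    · rcases hi with hi | hi <;> linarith [hi.1, hi.2, hj.1, hj.2]
    · linarith [hi.1, hi.2, hj.1, hj.2]

/-- Exchanging the values at a crossing pair gives a strictly better allocator of the same size. -/
theorem exists_better_of_crossing {n : ℕ} {w a : Fin n → ℝ} (ha : ∀ i, a i = 0 ∨ a i = 1)
    {i j : Fin n} (hw : w j < w i) (hlt : a i < a j) :
    ∃ b : Fin n → ℝ, (∀ k, b k = 0 ∨ b k = 1) ∧ ∑ k, b k = ∑ k, a k ∧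
      ∑ k, w k * a k < ∑ k, w k * b k := by
  have hi : a i = 0 := by rcases ha i with h | h <;> rcases ha j with h' | h' <;> linarith
  have hj : a j = 1 := by rcases ha j with h' | h' <;> linarith
  have hij : i ≠ j := by rintro rfl; exact lt_irrefl _ hlt
  refine ⟨fun k => a k + ((if k = i then 1 else 0) - (if k = j then 1 else 0)), ?_, ?_, ?_⟩
  · intro k
    by_cases h1 : k = i
    · subst h1
      simp [hi, hij]
    · by_cases h2 : k = j
      · subst h2
        simp [hj, h1]
      · simpa [h1, h2] using ha k
  · simp [Finset.sum_add_distrib]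
  · simp [mul_add, mul_sub, Finset.sum_add_distrib, hw]

theorem le_of_noCrossing {n : ℕ} {w a b : Fin n → ℝ} (ha : ∀ i, a i = 0 ∨ a i = 1)
    (hb : ∀ i, b i = 0 ∨ b i = 1) (hsum : ∑ i, b i = ∑ i, a i)
    (h : ∀ i j, w j < w i → a j ≤ a i) :
    ∑ i, w i * b i ≤ ∑ i, w i * a i := by
  obtain ⟨c, hc⟩ : ∃ c, ∀ i, (a i = 1 → c ≤ w i) ∧ (a i = 0 → w i ≤ c) := by
    rcases (Finset.univ.filter fun i => a i = 1).eq_empty_or_nonempty with he | hne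
    -- If `a` vanishes identically, any upper bound of `w` is a threshold.
    · obtain ⟨c, hc⟩ := (Set.finite_range w).bddAbove
      refine ⟨c, fun i => ⟨fun h1 => ?_, fun _ => hc ⟨i, rfl⟩⟩⟩
      exact absurd h1 (Finset.filter_eq_empty_iff.mp he (Finset.mem_univ i))
    -- Otherwise the least weight among the points with `a i = 1` is one.
    · obtain ⟨m, hm, hmin⟩ := Finset.exists_min_image _ w hne
      have hm1 : a m = 1 := (Finset.mem_filter.mp hm).2
      refine ⟨w m, fun i => ⟨fun h1 => hmin i (by simp [h1]), fun h0 => ?_⟩⟩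
      by_contra! hlt
      linarith [h i m hlt]
  have hpt : 0 ≤ ∑ i, (w i - c) * (a i - b i) := Finset.sum_nonneg fun i _ => by
    rcases ha i with h0 | h1
    · refine mul_nonneg_of_nonpos_of_nonpos (by linarith [(hc i).2 h0]) ?_
      rcases hb i with h' | h' <;> rw [h0, h'] <;> norm_num
    · refine mul_nonneg (by linarith [(hc i).1 h1]) ?_
      rcases hb i with h' | h' <;> rw [h1, h'] <;> norm_num
  have hexp : ∑ i, (w i - c) * (a i - b i) =
      ∑ i, w i * a i - ∑ i, w i * b i - c * (∑ i, a i - ∑ i, b i) := by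
    rw [← Finset.sum_sub_distrib, ← Finset.sum_sub_distrib, Finset.mul_sum,
      ← Finset.sum_sub_distrib]
    exact Finset.sum_congr rfl fun i _ => by ring
  rw [hexp, hsum] at hpt
  linarith

/-- Lemma 3 (Set Equivalence 1): for every q ∈ Q, A*_q = B*_q, i.e. a
q-explainable allocator maximizes t̄' if and only if its crossing sets
C_{g,02}, C_{02,b} and C_{g,b} are all empty. -/
theorem set_equivalence_one
    (n : ℕ) (hn : 1 ≤ n)
    (sg sb : Fin n → ℝ)
    (hsg : ∀ i, sg i = 0 ∨ sg i = 1) (hsb : ∀ i, sb i = 0 ∨ sb i = 1)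
    (q : ℝ) (hq : ∃ k : ℕ, 1 ≤ k ∧ k ≤ n ∧ q = (k : ℝ) / n)
    (a : Fin n → ℝ) (ha : isQAlloc n q a) :
    (∀ b : Fin n → ℝ, isQAlloc n q b → tbar n sg sb b ≤ tbar n sg sb a)
      ↔
    ((∀ i j, inZg n sg sb i → inZ02 n sg sb j → ¬ a i < a j) ∧
     (∀ i j, inZ02 n sg sb i → inZb n sg sb j → ¬ a i < a j) ∧
     (∀ i j, inZg n sg sb i → inZb n sg sb j → ¬ a i < a j)) := by
  rw [noCrossing_iff hsg hsb]
  simp only [tbar_le_iff hn]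
  constructor
  · intro hmax i j hw
    by_contra! hlt
    obtain ⟨b, hb, hsum, hbetter⟩ :=
      exists_better_of_crossing (w := fun k => sg k - sb k) ha.1 hw hlt
    exact absurd (hmax b ⟨hb, by rw [hsum]; exact ha.2⟩) (not_le.mpr hbetter)
  · intro h b hb
    have hpos : (0 : ℝ) < 1 / (n : ℝ) := by positivity
    have hsum : ∑ i, b i = ∑ i, a i := mul_left_cancel₀ hpos.ne' (hb.2.trans ha.2.symm)
    exact le_of_noCrossing (w := fun k => sg k - sb k) ha.1 hb.1 hsum h
end

section
/- (Lemma 3, direction 1) For every q ∈ Q, if a is a q-explainable allocator with C_{g,02}(a) = C_{02,b}(a) = C_{g,b}(a) = ∅, then a maximizes the sufficient ensemble performance: t̄'(a) ≥ t̄'(a') for every q-explainable allocator a'. -/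
/-!
Up to the constant `∑ i, sb i`, the sufficient ensemble performance of an allocator `x` is
`∑ i, w i * x i` with weights `w i = sg i - sb i`, equal to `1`, `0`, `-1` on `Z_g`, `Z_02`, `Z_b`
respectively. Emptiness of the three crossing sets says exactly that an index of larger weight is
allocated whenever one of smaller weight is. Such an allocator is a threshold rule: if `c` is the
smallest weight it allocates, it allocates every index with `w i > c` and none with `w i < c`, so
`(w i - c) * (b i - a i) ≤ 0` for every competitor `b`. Competitors allocate the same number of
indices, so the terms in `c` cancel on summing (`sum_mul_le_sum_mul_of_threshold`).
-/

open Finset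

/-- A `0`-`1` vector that is monotone along strict increases of the weight `w` maximizes the
`w`-weighted sum among the `0`-`1` vectors with the same total. -/
lemma sum_mul_le_sum_mul_of_threshold {ι : Type*} [Fintype ι] (w a b : ι → ℝ)
    (ha : ∀ i, a i = 0 ∨ a i = 1) (hb : ∀ i, b i = 0 ∨ b i = 1)
    (hsum : ∑ i, b i = ∑ i, a i) (hmono : ∀ i j, w j < w i → a j ≤ a i) :
    ∑ i, w i * b i ≤ ∑ i, w i * a i := by
  classical
  have hb0 : ∀ i, 0 ≤ b i := fun i => by rcases hb i with h | h <;> norm_num [h]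
  have hb1 : ∀ i, b i ≤ 1 := fun i => by rcases hb i with h | h <;> norm_num [h]
  rcases (Finset.univ.filter fun i => a i = 1).eq_empty_or_nonempty with hS | hS
  -- If nothing is allocated by `a`, then nothing is by `b` either.
  · have ha0 : ∀ i, a i = 0 := fun i =>
      (ha i).resolve_right (Finset.filter_eq_empty_iff.mp hS (Finset.mem_univ i))
    have hbs : ∑ i, b i = 0 := by rw [hsum]; simp [ha0]
    have hbz : ∀ i, b i = 0 := fun i =>
      (Finset.sum_eq_zero_iff_of_nonneg fun i _ => hb0 i).mp hbs i (Finset.mem_univ i)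
    simp [ha0, hbz]
  · obtain ⟨k, hk, hmin⟩ := Finset.exists_min_image _ w hS
    simp only [Finset.mem_filter, Finset.mem_univ, true_and] at hk hmin
    -- The threshold is `w k`, the least allocated weight.
    have hterm : ∀ i, (w i - w k) * (b i - a i) ≤ 0 := by
      intro i
      rcases lt_trichotomy (w i) (w k) with h | h | h
      · have hai : a i = 0 := (ha i).resolve_right fun h1 => absurd (hmin i h1) (not_le.mpr h)
        exact mul_nonpos_of_nonpos_of_nonneg (by linarith) (by linarith [hb0 i])
      · simp [h]
      · have := hmono i k h
        exact mul_nonpos_of_nonneg_of_nonpos (by linarith) (by linarith [hb1 i])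
    have hle : ∑ i, (w i - w k) * (b i - a i) ≤ 0 := Finset.sum_nonpos fun i _ => hterm i
    have hexp : ∑ i, (w i - w k) * (b i - a i)
        = (∑ i, w i * b i - ∑ i, w i * a i) - w k * (∑ i, b i - ∑ i, a i) := by
      rw [← Finset.sum_sub_distrib, ← Finset.sum_sub_distrib, Finset.mul_sum,
        ← Finset.sum_sub_distrib]
      exact Finset.sum_congr rfl fun i _ => by ring
    rw [hexp, hsum] at hle
    linarith

/-- Lemma 3, direction 1: if a q-explainable allocator has empty crossing sets
C_{g,02}, C_{02,b}, C_{g,b}, then it maximizes the sufficient ensemble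
performance t̄' over all q-explainable allocators. -/
theorem set_equivalence_one_dir1
    (n : ℕ) (hn : 1 ≤ n)
    (sg sb : Fin n → ℝ)
    (hsg : ∀ i, sg i = 0 ∨ sg i = 1) (hsb : ∀ i, sb i = 0 ∨ sb i = 1)
    (q : ℝ) (hq : ∃ k : ℕ, 1 ≤ k ∧ k ≤ n ∧ q = (k : ℝ) / n)
    (a : Fin n → ℝ) (ha : isQAlloc n q a)
    (hC1 : ∀ i j, inZg n sg sb i → inZ02 n sg sb j → ¬ a i < a j)
    (hC2 : ∀ i j, inZ02 n sg sb i → inZb n sg sb j → ¬ a i < a j)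
    (hC3 : ∀ i j, inZg n sg sb i → inZb n sg sb j → ¬ a i < a j) :
    ∀ b : Fin n → ℝ, isQAlloc n q b → tbar n sg sb b ≤ tbar n sg sb a := by
  intro b hb
  obtain ⟨ha01, haq⟩ := ha
  obtain ⟨hb01, hbq⟩ := hb
  have hn0 : (1 / (n : ℝ)) ≠ 0 := by positivity
  have hsum : ∑ i, b i = ∑ i, a i := mul_left_cancel₀ hn0 (hbq.trans haq.symm)
  have hmono : ∀ i j, sg j - sb j < sg i - sb i → a j ≤ a i := by
    intro i j hij
    have h1 := hC1 i j
    have h2 := hC2 i j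
    have h3 := hC3 i j
    simp only [inZg, inZb, inZ02, inZ0, inZ2, not_lt] at h1 h2 h3
    rcases hsg i with hi | hi <;> rcases hsb i with hi' | hi' <;>
      rcases hsg j with hj | hj <;> rcases hsb j with hj' | hj' <;>
      simp [hi, hi', hj, hj'] at h1 h2 h3 <;>
      first
        | assumption
        | (exfalso; rw [hi, hi', hj, hj'] at hij; norm_num at hij)
  have key := sum_mul_le_sum_mul_of_threshold (fun i => sg i - sb i) a b ha01 hb01 hsum hmono
  have split : ∀ x : Fin n → ℝ,
      ∑ i, (sg i * x i + sb i * (1 - x i)) = ∑ i, sb i + ∑ i, (sg i - sb i) * x i := by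
    intro x
    rw [← Finset.sum_add_distrib]
    exact Finset.sum_congr rfl fun i _ => by ring
  unfold tbar
  rw [split a, split b]
  gcongr
end

section
/- (Lemma 3, direction 2) For every q ∈ Q, if a is a q-explainable allocator maximizing the sufficient ensemble performance t̄' over all q-explainable allocators, then the crossing sets C_{g,02}(a), C_{02,b}(a), and C_{g,b}(a) are all empty. -/
/-!
The performance `tbar` is, up to a constant and the factor `1 / n`, the weighted sum of `a`
with weights `sg i - sb i`, which equal `1` on `Z_g`, `0` on `Z_02` and `-1` on `Z_b`. In each of
the three crossings `a i < a j` the weight at `i` exceeds the weight at `j`, so exchanging the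
values of `a` at `i` and `j` keeps `∑ i, a i` and strictly increases `tbar`, contradicting
maximality. `not_lt_of_weight_lt` carries out this exchange.
-/

open Finset

/-- Exchange argument: a maximizer of `tbar` among the `q`-explainable allocators cannot take a
smaller value at an index of larger weight `sg - sb`. -/
theorem not_lt_of_weight_lt {n : ℕ} {sg sb : Fin n → ℝ} {q : ℝ} {a : Fin n → ℝ}
    (ha : isQAlloc n q a)
    (hmax : ∀ b : Fin n → ℝ, isQAlloc n q b → tbar n sg sb b ≤ tbar n sg sb a)
    {i j : Fin n} (hw : sg j - sb j < sg i - sb i) : ¬ a i < a j := by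
  intro hlt
  have hij : i ≠ j := by
    rintro rfl
    exact lt_irrefl _ hlt
  have hb : isQAlloc n q (fun k => a (Equiv.swap i j k)) :=
    ⟨fun k => ha.1 _, by rw [Equiv.sum_comp (Equiv.swap i j) a]; exact ha.2⟩
  have hle := hmax _ hb
  have hn : 0 < 1 / (n : ℝ) := one_div_pos.mpr (Nat.cast_pos.mpr i.pos)
  unfold tbar at hle
  have hle' := le_of_mul_le_mul_left hle hn
  have hdiff : ∑ k, (sg k * a (Equiv.swap i j k) + sb k * (1 - a (Equiv.swap i j k)))
      - ∑ k, (sg k * a k + sb k * (1 - a k))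
      = ((sg i - sb i) - (sg j - sb j)) * (a j - a i) := by
    rw [← Finset.sum_sub_distrib, Finset.sum_eq_add i j hij]
    · rw [Equiv.swap_apply_left, Equiv.swap_apply_right]
      ring
    · rintro k - ⟨hki, hkj⟩
      rw [Equiv.swap_apply_of_ne_of_ne hki hkj, sub_self]
    · simp
    · simp
  have hpos := mul_pos (sub_pos.mpr hw) (sub_pos.mpr hlt)
  linarith

/-- Lemma 3, direction 2: if a q-explainable allocator maximizes the sufficient
ensemble performance t̄' over all q-explainable allocators, then its crossing
sets C_{g,02}, C_{02,b} and C_{g,b} are all empty. -/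
theorem set_equivalence_one_dir2
    (n : ℕ) (hn : 1 ≤ n)
    (sg sb : Fin n → ℝ)
    (hsg : ∀ i, sg i = 0 ∨ sg i = 1) (hsb : ∀ i, sb i = 0 ∨ sb i = 1)
    (q : ℝ) (hq : ∃ k : ℕ, 1 ≤ k ∧ k ≤ n ∧ q = (k : ℝ) / n)
    (a : Fin n → ℝ) (ha : isQAlloc n q a)
    (hmax : ∀ b : Fin n → ℝ, isQAlloc n q b → tbar n sg sb b ≤ tbar n sg sb a) :
    (∀ i j, inZg n sg sb i → inZ02 n sg sb j → ¬ a i < a j) ∧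
    (∀ i j, inZ02 n sg sb i → inZb n sg sb j → ¬ a i < a j) ∧
    (∀ i j, inZg n sg sb i → inZb n sg sb j → ¬ a i < a j) := by
  refine ⟨?_, ?_, ?_⟩
  · rintro i j ⟨hi, hi'⟩ (⟨hj, hj'⟩ | ⟨hj, hj'⟩) <;>
      exact not_lt_of_weight_lt ha hmax (by rw [hi, hi', hj, hj']; norm_num)
  · rintro i j (⟨hi, hi'⟩ | ⟨hi, hi'⟩) ⟨hj, hj'⟩ <;>
      exact not_lt_of_weight_lt ha hmax (by rw [hi, hi', hj, hj']; norm_num)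
  · rintro i j ⟨hi, hi'⟩ ⟨hj, hj'⟩
    exact not_lt_of_weight_lt ha hmax (by rw [hi, hi', hj, hj']; norm_num)
end

section
/- (Lemma 4, direction 1) For every q ∈ Q, if a ∈ A*_q and the crossing set C_{2,0}(a) is empty, then a maximizes the sufficient explainable performance over A*_q: t̄'_g(a) ≥ t̄'_g(a') for every a' ∈ A*_q. -/
/-!
An optimal allocator `a` with empty crossing set never leaves out an index `j` with `sg j = 1`
while selecting an index `i` with `sg i = 0`. Exchanging `i` for `j` changes `n * tbar` by
`(sg j - sb j) - (sg i - sb i) = 1 - sb j + sb i`, which is positive, contradicting optimality,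
unless `sb j = 1` and `sb i = 0`, i.e. `j` is in `Z_2` and `i` in `Z_0`, where the pair is a crossing.
Hence either `a` selects every index with `sg = 1`, or every selected index has `sg = 1`; in both
cases `a` maximizes `tbarg` among all allocators of the same size, optimal or not.
-/

open Finset

/-- Exchange inequality: in an optimal allocator, a selected index has weight `sg - sb` at least
that of any index left out. -/
lemma memAstar_exchange {n : ℕ} (hn : 1 ≤ n) {q : ℝ} {sg sb a : Fin n → ℝ}
    (ha : memAstar n q sg sb a) {i j : Fin n} (hi : a i = 1) (hj : a j = 0) :
    sg j - sb j ≤ sg i - sb i := by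
  obtain ⟨⟨h01, hsum⟩, hopt⟩ := ha
  have hn' : (0 : ℝ) < 1 / (n : ℝ) := by
    have : (0 : ℝ) < n := by exact_mod_cast hn
    positivity
  have hij : i ≠ j := by
    rintro rfl
    linarith
  have h := hopt (fun k => a k + (if k = j then 1 else 0) - (if k = i then 1 else 0)) ⟨?_, ?_⟩
  · unfold tbar at h
    have h' := le_of_mul_le_mul_left h hn'
    have e : ∑ k, (sg k * (a k + (if k = j then 1 else 0) - (if k = i then 1 else 0))
        + sb k * (1 - (a k + (if k = j then 1 else 0) - (if k = i then 1 else 0))))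
        = ∑ k, (sg k * a k + sb k * (1 - a k)) + (sg j - sb j) - (sg i - sb i) := by
      have e' : ∀ k, (sg k * (a k + (if k = j then 1 else 0) - (if k = i then 1 else 0))
          + sb k * (1 - (a k + (if k = j then 1 else 0) - (if k = i then 1 else 0))))
          = (sg k * a k + sb k * (1 - a k)) + (if k = j then sg k - sb k else 0)
            - (if k = i then sg k - sb k else 0) := by
        intro k
        split_ifs <;> ring
      rw [Finset.sum_congr rfl fun k _ => e' k, Finset.sum_sub_distrib, Finset.sum_add_distrib]
      simp
    linarith
  · intro k
    by_cases hki : k = i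
    · subst hki
      simp [hi, hij]
    · by_cases hkj : k = j
      · subst hkj
        simp [hj, hki]
      · simpa [hki, hkj] using h01 k
  · rw [Finset.sum_sub_distrib, Finset.sum_add_distrib]
    simpa using hsum

/-- Lemma 4, direction 1: if a ∈ A*_q and the crossing set C_{2,0}(a) is empty,
then a maximizes the sufficient explainable performance t̄'_g over A*_q. -/
theorem set_equivalence_two_dir1
    (n : ℕ) (hn : 1 ≤ n)
    (sg sb : Fin n → ℝ)
    (hsg : ∀ i, sg i = 0 ∨ sg i = 1) (hsb : ∀ i, sb i = 0 ∨ sb i = 1)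
    (q : ℝ) (hq : ∃ k : ℕ, 1 ≤ k ∧ k ≤ n ∧ q = (k : ℝ) / n)
    (a : Fin n → ℝ) (ha : memAstar n q sg sb a)
    (hC : ∀ i j, inZ2 n sg sb i → inZ0 n sg sb j → ¬ a i < a j) :
    ∀ b : Fin n → ℝ, memAstar n q sg sb b → tbarg n sg b ≤ tbarg n sg a := by
  intro b hb
  have hn' : (0 : ℝ) < 1 / (n : ℝ) := by
    have : (0 : ℝ) < n := by exact_mod_cast hn
    positivity
  have hab : ∑ i, b i = ∑ i, a i :=
    mul_left_cancel₀ hn'.ne' (hb.1.2.trans ha.1.2.symm)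
  have h01 := ha.1.1
  have hb01 := hb.1.1
  unfold tbarg
  refine mul_le_mul_of_nonneg_left ?_ hn'.le
  by_cases hex : ∃ j, sg j = 1 ∧ a j = 0
  · obtain ⟨j, hgj, haj⟩ := hex
    have hsel : ∀ i, a i = 1 → sg i = 1 := by
      intro i hai
      refine (hsg i).resolve_left fun hgi => ?_
      have hw := memAstar_exchange hn ha hai haj
      -- The exchange inequality leaves only `j ∈ Z_2`, `i ∈ Z_0`.
      rcases hsb i with hbi | hbi <;> rcases hsb j with hbj | hbj
      · linarith
      · exact hC j i ⟨hgj, hbj⟩ ⟨hgi, hbi⟩ (by rw [hai, haj]; exact one_pos)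
      · linarith
      · linarith
    calc ∑ i, sg i * b i ≤ ∑ i, b i := by
          refine Finset.sum_le_sum fun i _ => ?_
          rcases hsg i with h | h <;> rcases hb01 i with h' | h' <;> simp [h, h']
      _ = ∑ i, a i := hab
      _ = ∑ i, sg i * a i := by
          refine Finset.sum_congr rfl fun i _ => ?_
          rcases h01 i with h | h
          · simp [h]
          · simp [h, hsel i h]
  · push Not at hex
    refine Finset.sum_le_sum fun i _ => ?_
    rcases hsg i with h | h
    · simp [h]
    · have hai : a i = 1 := (h01 i).resolve_left (hex i h)
      rcases hb01 i with h' | h' <;> simp [h, h', hai]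
end
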